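/- For every Gauss code G, the signed sum of the weights of all crossings vanishes: Σ_c ε(c) W(c) = 0. (Equivalently, the first Vassiliev coefficient v₁ = Σ_c sgn(c) W_K(c) of the Affine Index Polynomial is zero for every virtual knot K.) -/

import Mathlib

open Finset

/-- A Gauss code with `n` crossings: the `2*n` points are arranged in the cyclic order
`0, 1, …, 2*n - 1` on `Fin (2*n)`; each pair `(c, x)` of a crossing `c : Fin n` and a
label `x : Bool` (`true` = O = over, `false` = U = under) occupies a distinct point
`pt (c, x)`, and each crossing carries a sign `±1`. -/
structure GaussCode (n : ℕ) where
  pt : Fin n × Bool → Fin (2 * n)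
  inj : Function.Injective pt
  sign : Fin n → ℤ
  sign_unit : ∀ c, sign c = 1 ∨ sign c = -1

namespace GaussCode

/-- The cyclic distance from `i` forward to `j` in `Fin m`. -/
def cdist {m : ℕ} (i j : Fin m) : ℕ := (j.val + m - i.val) % m

/-- The cyclically next point after `i`. -/
def next {m : ℕ} (i : Fin m) : Fin m := ⟨(i.val + 1) % m, Nat.mod_lt _ i.pos⟩

variable {n : ℕ}

/-- `firstO G i c` holds when the first occurrence of the crossing `c`, reading the
points cyclically forward starting from the arc immediately preceding the point `i`,
carries the label O. (Arcs are indexed by the point they immediately precede.) -/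
def firstO (G : GaussCode n) (i : Fin (2 * n)) (c : Fin n) : Prop :=
  cdist i (G.pt (c, true)) < cdist i (G.pt (c, false))

instance (G : GaussCode n) (i : Fin (2 * n)) (c : Fin n) : Decidable (G.firstO i c) :=
  inferInstanceAs (Decidable (_ < _))

/-- The Cheng coloring `λ` of the arc immediately preceding the point `i`: the sum of
`ε c` over all crossings `c` whose first occurrence, reading cyclically forward from
this arc, carries the label O. -/
def lam (G : GaussCode n) (i : Fin (2 * n)) : ℤ :=
  ∑ c : Fin n, if G.firstO i c then G.sign c else 0

/-- The writhe of a Gauss code: the sum of the signs of its crossings. -/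
def wr (G : GaussCode n) : ℤ := ∑ c : Fin n, G.sign c

/-- The weight `W(c) = λ_O(c) - λ_U(c) - ε(c)` of a crossing `c`, where `λ_O(c)`
(resp. `λ_U(c)`) is `λ` of the arc immediately preceding the O (resp. U) point of `c`. -/
def W (G : GaussCode n) (c : Fin n) : ℤ :=
  G.lam (G.pt (c, true)) - G.lam (G.pt (c, false)) - G.sign c

open LaurentPolynomial in
/-- The affine index polynomial `P_G(t) = Σ_c ε(c) (t^{W(c)} - 1) ∈ ℤ[t,t⁻¹]`. -/
noncomputable def P (G : GaussCode n) : LaurentPolynomial ℤ :=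
  ∑ c : Fin n, G.sign c • (T (G.W c) - 1)

end GaussCode

namespace GaussCode

/-!
Reading forward past a point, `λ` changes only there: it drops by `ε c` at the O point of `c` and
rises by `ε c` at its U point. Hence `∑ c, ε c * (λ_O c - λ_U c)` is the cyclic sum of
`λ i * (λ i - λ (i + 1))`. As `∑ i, λ i ^ 2 = ∑ i, λ (i + 1) ^ 2`, twice that sum is
`∑ i, (λ i - λ (i + 1)) ^ 2 = 2 * ∑ c, ε c ^ 2`, which is what the terms `-ε c` of the weights
cancel.
-/

theorem two_mul_sum_mul_sub_comp {α R : Type*} [Fintype α] [CommRing R] {σ : α → α}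
    (hσ : σ.Bijective) (f : α → R) :
    2 * ∑ x, f x * (f x - f (σ x)) = ∑ x, (f x - f (σ x)) ^ 2 := by
  have sum_sq : ∑ x, f (σ x) ^ 2 = ∑ x, f x ^ 2 := hσ.sum_comp (f · ^ 2)
  calc 2 * ∑ x, f x * (f x - f (σ x))
      = ∑ x, ((f x - f (σ x)) ^ 2 + (f x ^ 2 - f (σ x) ^ 2)) := by
        rw [Finset.mul_sum]
        exact Finset.sum_congr rfl fun x _ => by ring
    _ = ∑ x, (f x - f (σ x)) ^ 2 := by
        rw [Finset.sum_add_distrib, Finset.sum_sub_distrib, sum_sq, sub_self, add_zero]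

section CyclicDistance

variable {m : ℕ} {i j k : Fin m}

theorem cdist_lt (i j : Fin m) : cdist i j < m := Nat.mod_lt _ i.pos

theorem cdist_eq_val_sub (i j : Fin m) : cdist i j = (j - i).val := by
  rw [cdist, Fin.val_sub, Nat.add_comm (m - i.val), Nat.add_sub_assoc i.isLt.le]

theorem next_eq_add_one [NeZero m] (i : Fin m) : next i = i + 1 := by
  simp [Fin.ext_iff, next, Fin.val_add]

theorem cdist_self (i : Fin m) : cdist i i = 0 := by
  have := i.neZero
  rw [cdist_eq_val_sub, sub_self, Fin.val_zero]

theorem cdist_pos (h : j ≠ i) : 0 < cdist i j := by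
  have := i.neZero
  rw [cdist_eq_val_sub, Fin.val_pos_iff, Fin.pos_iff_ne_zero, sub_ne_zero]
  exact h

theorem cdist_next_self_add_one (i : Fin m) : cdist (next i) i + 1 = m := by
  obtain ⟨k, rfl⟩ := Nat.exists_eq_succ_of_ne_zero i.pos.ne'
  rw [cdist_eq_val_sub, next_eq_add_one, sub_add_cancel_left, Fin.coe_neg_one]

theorem cdist_next_add_one (h : j ≠ i) : cdist (next i) j + 1 = cdist i j := by
  have := i.neZero
  rw [cdist_eq_val_sub, next_eq_add_one, ← sub_sub, Fin.val_sub_one_of_ne_zero (sub_ne_zero.mpr h),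
    ← cdist_eq_val_sub, Nat.sub_add_cancel (cdist_pos h)]

theorem cdist_next_lt_cdist_next_self (h : j ≠ i) : cdist (next i) j < cdist (next i) i := by
  have := cdist_next_add_one h
  have := cdist_next_self_add_one i
  have := cdist_lt i j
  omega

theorem cdist_next_lt_cdist_next_iff (hj : j ≠ i) (hk : k ≠ i) :
    cdist (next i) j < cdist (next i) k ↔ cdist i j < cdist i k := by
  rw [← cdist_next_add_one hj, ← cdist_next_add_one hk, Nat.add_lt_add_iff_right]

theorem next_bijective : (next : Fin m → Fin m).Bijective := by
  refine Finite.injective_iff_bijective.mp fun i j hij => ?_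
  have := i.neZero
  rwa [next_eq_add_one, next_eq_add_one, add_left_inj] at hij

theorem ite_cdist_lt_sub_ite_cdist_next_lt {A : Type*} [AddGroup A] (hjk : j ≠ k) (i : Fin m)
    (r : A) :
    (if cdist i j < cdist i k then r else 0)
        - (if cdist (next i) j < cdist (next i) k then r else 0)
      = (if j = i then r else 0) - (if k = i then r else 0) := by
  rcases eq_or_ne j i with rfl | hj
  · have before : cdist j j < cdist j k := cdist_self j ▸ cdist_pos hjk.symm
    have after := (cdist_next_lt_cdist_next_self hjk.symm).not_gt
    rw [if_pos before, if_neg after, if_pos rfl, if_neg hjk.symm]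
  rcases eq_or_ne k i with rfl | hk
  · have before : ¬ cdist k j < cdist k k := cdist_self k ▸ Nat.not_lt_zero _
    have after := cdist_next_lt_cdist_next_self hjk
    rw [if_neg before, if_pos after, if_neg hjk, if_pos rfl]
  · simp only [cdist_next_lt_cdist_next_iff hj hk, if_neg hj, if_neg hk, sub_self]

end CyclicDistance

section ChengLabel

variable {m : ℕ} {ι : Type*} [Fintype ι]

/-- The Cheng coloring `λ` for crossings that carry arbitrary weights `w` instead of signs and
occupy some of the `m` cyclically ordered points. As for `lam`, an arc is given by the point it
immediately precedes. -/
def chengLabel {A : Type*} [AddCommMonoid A] (pt : ι × Bool → Fin m) (w : ι → A) (i : Fin m) : A :=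
  ∑ c, if cdist i (pt (c, true)) < cdist i (pt (c, false)) then w c else 0

variable {A R : Type*} [AddCommGroup A] [CommRing R] {pt : ι × Bool → Fin m}

theorem chengLabel_sub_chengLabel_next (hpt : ∀ c, pt (c, true) ≠ pt (c, false)) (w : ι → A)
    (i : Fin m) :
    chengLabel pt w i - chengLabel pt w (next i)
      = ∑ c, ((if pt (c, true) = i then w c else 0) - (if pt (c, false) = i then w c else 0)) := by
  rw [chengLabel, chengLabel, ← Finset.sum_sub_distrib]
  exact Finset.sum_congr rfl fun c _ => ite_cdist_lt_sub_ite_cdist_next_lt (hpt c) i (w c)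

theorem chengLabel_sub_chengLabel_next_over (hpt : pt.Injective) (w : ι → A) (c : ι) :
    chengLabel pt w (pt (c, true)) - chengLabel pt w (next (pt (c, true))) = w c := by
  classical
  rw [chengLabel_sub_chengLabel_next fun d => hpt.ne (by simp)]
  simp [hpt.eq_iff]

theorem chengLabel_sub_chengLabel_next_under (hpt : pt.Injective) (w : ι → A) (c : ι) :
    chengLabel pt w (pt (c, false)) - chengLabel pt w (next (pt (c, false))) = -w c := by
  classical
  rw [chengLabel_sub_chengLabel_next fun d => hpt.ne (by simp)]
  simp [hpt.eq_iff]

theorem sum_mul_chengLabel_sub_chengLabel_next (hpt : ∀ c, pt (c, true) ≠ pt (c, false))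
    (w : ι → R) (f : Fin m → R) :
    ∑ i, f i * (chengLabel pt w i - chengLabel pt w (next i))
      = ∑ c, w c * (f (pt (c, true)) - f (pt (c, false))) := by
  simp only [chengLabel_sub_chengLabel_next hpt, Finset.mul_sum]
  rw [Finset.sum_comm]
  refine Finset.sum_congr rfl fun c _ => ?_
  simp only [mul_sub, mul_ite, mul_zero, Finset.sum_sub_distrib, Finset.sum_ite_eq,
    Finset.mem_univ, if_true, mul_comm]

theorem sum_sq_chengLabel_sub_chengLabel_next (hpt : pt.Injective) (w : ι → R) :
    ∑ i, (chengLabel pt w i - chengLabel pt w (next i)) ^ 2 = 2 * ∑ c, w c * w c := by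
  simp only [sq]
  rw [sum_mul_chengLabel_sub_chengLabel_next fun c => hpt.ne (by simp)]
  simp only [chengLabel_sub_chengLabel_next_over hpt, chengLabel_sub_chengLabel_next_under hpt,
    sub_neg_eq_add, ← two_mul, mul_left_comm _ (2 : R), ← Finset.mul_sum]

theorem signed_weight_sum_eq_zero_general [IsAddTorsionFree R] (hpt : pt.Injective) (w : ι → R) :
    ∑ c, w c * (chengLabel pt w (pt (c, true)) - chengLabel pt w (pt (c, false)) - w c) = 0 := by
  set label := chengLabel pt w
  have label_sum : ∑ c, w c * (label (pt (c, true)) - label (pt (c, false)))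
      = ∑ c, w c * w c := by
    refine nsmul_right_injective two_ne_zero ?_
    simp only [nsmul_eq_mul, Nat.cast_ofNat]
    rw [← sum_mul_chengLabel_sub_chengLabel_next fun c => hpt.ne (by simp),
      two_mul_sum_mul_sub_comp next_bijective, sum_sq_chengLabel_sub_chengLabel_next hpt]
  simp only [mul_sub _ _ (w _), Finset.sum_sub_distrib, label_sum, sub_self]

end ChengLabel

/-- For every Gauss code `G`, the signed sum of the weights of all
crossings vanishes: `Σ_c ε(c) W(c) = 0`.  Equivalently, the first Vassiliev
coefficient `v₁ = Σ_c sgn(c) W_K(c)` of the Affine Index Polynomial is zero for every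
virtual knot `K`. -/
theorem signed_weight_sum_eq_zero {n : ℕ} (G : GaussCode n) :
    ∑ c : Fin n, G.sign c * G.W c = 0 :=
  signed_weight_sum_eq_zero_general G.inj G.sign

end GaussCode
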